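/- arXiv:1308.5849 — 2 statements merged into one kernel-verified Lean document; each statement's English description precedes it below -/
import Mathlib

section
/- Let 𝓗 be a collection of nine pairwise distinct sets whose union has exactly four elements (equivalently, nine distinct subsets of a four-element set). Then at least one of the 3-singleton matrix S³, the 3-cosingleton matrix S̄³, and the 3-monotone matrix M³ can be found in 𝓗. -/
/-- A 0-1 matrix `N` (given as a `Prop`-valued matrix, `N i j` meaning entry 1)
with rows indexed by `Fin a` and columns by `Fin b` *can be found* in a collection
of sets `𝓗` if there are `a` distinct sets of `𝓗` and `b` distinct elements of
`⋃₀ 𝓗` such that `N` is the incidence matrix of the sets over the elements. -/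
def FoundIn {α : Type*} {a b : ℕ} (N : Fin a → Fin b → Prop) (𝓗 : Set (Set α)) : Prop :=
  ∃ (H : Fin a → Set α) (e : Fin b → α),
    Function.Injective H ∧ Function.Injective e ∧
    (∀ i, H i ∈ 𝓗) ∧ (∀ j, e j ∈ ⋃₀ 𝓗) ∧
    (∀ i j, e j ∈ H i ↔ N i j)

/-- The `n`-singleton matrix `Sⁿ`: `n+1` rows, `n` columns, entry 1 iff `i = j+1`. -/
def singletonMatrix (n : ℕ) : Fin (n + 1) → Fin n → Prop :=
  fun i j => (i : ℕ) = (j : ℕ) + 1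

/-- The `n`-cosingleton matrix `S̄ⁿ`: `n+1` rows, `n` columns, entry 0 iff `i = j`. -/
def cosingletonMatrix (n : ℕ) : Fin (n + 1) → Fin n → Prop :=
  fun i j => (i : ℕ) ≠ (j : ℕ)

/-- The `n`-monotone matrix `Mⁿ`: `n+1` rows, `n` columns, entry 1 iff `i ≥ j+1`. -/
def monotoneMatrix (n : ℕ) : Fin (n + 1) → Fin n → Prop :=
  fun i j => (j : ℕ) + 1 ≤ (i : ℕ)


/-!
Suppose that none of the three matrices can be found. Deleting one of the four points identifies
members of the family at most in pairs, so nine sets leave at least five traces on the remaining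
triple `T`. A family on `T` that contains `∅` and `T` but none of the three configurations has at
most four members, so no such trace contains both `∅` and `T`.

If `∅` belongs to the family, then no set with three or more elements does. Since `∅` and the
singletons do not all occur in the trace away from `x`, for every point `x` some `{a}` and `{a, x}`
are missing. Varying `x` gives one missing singleton and two missing pairs, hence at most
`1 + 3 + 4` sets. Complementing every set rules out the full set in the same way.

Otherwise only the three middle layers remain. A singleton and its complement never both occur, so
these two layers contribute at most four sets and at most one pair is missing. Two singletons
`{x}` and `{y}` in the family would force the same missing pair `{a, x} = {b, y}`, so `a = y`,
although `{a}` is missing. Thus there is at most one singleton and, by complementation, at most one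
triple, and again at most `1 + 6 + 1` sets.
-/

section Development

open Finset
open scoped FinsetFamily

section FoundIn

variable {α β : Type*} {a b : ℕ} {N : Fin a → Fin b → Prop} {𝓗 : Set (Set α)}

theorem foundIn_of_rows (hN : Function.Injective N) (hcol : ∀ j, ∃ i, N i j) {e : Fin b → α}
    (he : Function.Injective e) (hrow : ∀ i, ∃ H ∈ 𝓗, ∀ j, e j ∈ H ↔ N i j) : FoundIn N 𝓗 := by
  choose H hH hHN using hrow
  refine ⟨H, e, fun i i' hii' => hN ?_, he, hH, fun j => ?_, hHN⟩
  · ext j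
    rw [← hHN, ← hHN, hii']
  · obtain ⟨i, hij⟩ := hcol j
    exact Set.mem_sUnion_of_mem ((hHN i j).2 hij) (hH i)

theorem FoundIn.image (h : FoundIn N 𝓗) {f : α → β} (hf : Function.Injective f) :
    FoundIn N (Set.image f '' 𝓗) := by
  obtain ⟨H, e, hH, he, hmem, hcover, hN⟩ := h
  refine ⟨fun i => f '' H i, fun j => f (e j), hf.image_injective.comp hH, hf.comp he,
    fun i => Set.mem_image_of_mem _ (hmem i), fun j => ?_, fun i j => ?_⟩
  · obtain ⟨K, hK, hjK⟩ := hcover j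
    exact ⟨f '' K, Set.mem_image_of_mem _ hK, Set.mem_image_of_mem f hjK⟩
  · rw [hf.mem_set_image, hN]

theorem singletonMatrix_injective (n : ℕ) : Function.Injective (singletonMatrix n) := by
  intro i i' h
  have key (k : Fin n) : i = k.succ ↔ i' = k.succ := by
    simpa only [singletonMatrix, Fin.ext_iff, Fin.val_succ] using iff_of_eq (congrFun h k)
  rcases i.eq_zero_or_eq_succ with rfl | ⟨k, rfl⟩
  · rcases i'.eq_zero_or_eq_succ with rfl | ⟨k', rfl⟩
    · rfl
    · exact (key k').2 rfl
  · exact ((key k).1 rfl).symm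

theorem cosingletonMatrix_injective (n : ℕ) : Function.Injective (cosingletonMatrix n) := by
  intro i i' h
  have key (k : Fin n) : i = k.castSucc ↔ i' = k.castSucc := by
    simpa only [cosingletonMatrix, Fin.ext_iff, Fin.val_castSucc, not_iff_not] using
      iff_of_eq (congrFun h k)
  rcases i.eq_castSucc_or_eq_last with ⟨k, rfl⟩ | rfl
  · exact ((key k).1 rfl).symm
  · rcases i'.eq_castSucc_or_eq_last with ⟨k', rfl⟩ | rfl
    · exact (key k').2 rfl
    · rfl

theorem monotoneMatrix_injective (n : ℕ) : Function.Injective (monotoneMatrix n) := by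
  intro i i' h
  have key (k : ℕ) (hk : k < n) : k < i ↔ k < i' := iff_of_eq (congrFun h ⟨k, hk⟩)
  rcases lt_trichotomy i i' with hlt | heq | hlt
  · exact absurd ((key i (by omega)).2 hlt) (lt_irrefl _)
  · exact heq
  · exact absurd ((key i' (by omega)).1 hlt) (lt_irrefl _)

end FoundIn

variable {ι : Type*} {𝓕 : Finset (Finset ι)} {A T : Finset ι} {a b x : ι}

section Slices

variable [Fintype ι]

theorem card_eq_sum_five_slices (𝓕 : Finset (Finset ι)) (hι : Fintype.card ι = 4) :
    #𝓕 = #(𝓕 # 0) + #(𝓕 # 1) + #(𝓕 # 2) + #(𝓕 # 3) + #(𝓕 # 4) := by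
  rw [← sum_card_slice 𝓕, hι, ← Nat.range_succ_eq_Iic]
  simp only [sum_range_succ, sum_range_zero, zero_add]

theorem card_slice_add_card_le_choose {𝓜 : Finset (Finset ι)} {r : ℕ}
    (h𝓜 : (𝓜 : Set (Finset ι)).Sized r) (hdisj : Disjoint 𝓜 𝓕) :
    #(𝓕 # r) + #𝓜 ≤ (Fintype.card ι).choose r := by
  classical
  rw [← card_union_of_disjoint (hdisj.symm.mono_left slice_subset)]
  refine Set.Sized.card_le ?_
  rw [coe_union, Set.sized_union]
  exact ⟨sized_slice, h𝓜⟩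

variable [DecidableEq ι]

theorem card_slice_two_le_four (hι : Fintype.card ι = 4) {x y : ι} (hax : a ≠ x) (hby : b ≠ y)
    (hne : ({a, x} : Finset ι) ≠ {b, y}) (hpair : {a, x} ∉ 𝓕) (hpair' : {b, y} ∉ 𝓕) :
    #(𝓕 # 2) ≤ 4 := by
  have hle : #(𝓕 # 2) + #{({a, x} : Finset ι), {b, y}} ≤ (Fintype.card ι).choose 2 :=
    card_slice_add_card_le_choose (by simp [Set.Sized, hax, hby]) (by simp [hpair, hpair'])
  rw [card_pair hne, hι, show Nat.choose 4 2 = 6 from rfl] at hle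
  omega

theorem card_slice_compls (𝓕 : Finset (Finset ι)) {r : ℕ} (hr : r ≤ Fintype.card ι) :
    #(𝓕ᶜˢ # r) = #(𝓕 # (Fintype.card ι - r)) := by
  rw [← card_compls]
  congr 1
  ext A
  have hA := card_le_univ A
  simp only [mem_compls, mem_slice, compl_compl, card_compl]
  exact and_congr_right fun _ => by omega

theorem card_compl_singleton_of_card_eq_succ {n : ℕ} (hι : Fintype.card ι = n + 1)
    (x : ι) : #({x}ᶜ : Finset ι) = n := by
  rw [card_compl, hι, card_singleton, Nat.add_sub_cancel]

end Slices

variable [DecidableEq ι]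

section Trace

theorem subset_cases_of_card_eq_three (hT : #T = 3) (hA : A ⊆ T) :
    A = ∅ ∨ A = T ∨ (∃ a ∈ T, A = {a}) ∨ ∃ b ∈ T, A = T.erase b := by
  have hcard : #(T \ A) = 3 - #A := by rw [card_sdiff_of_subset hA, hT]
  have hle : #A ≤ 3 := hT ▸ card_le_card hA
  interval_cases hA' : #A
  · exact Or.inl (card_eq_zero.1 hA')
  · obtain ⟨a, rfl⟩ := card_eq_one.1 hA'
    exact Or.inr (Or.inr (Or.inl ⟨a, singleton_subset_iff.1 hA, rfl⟩))
  · obtain ⟨b, hb⟩ := card_eq_one.1 hcard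
    have hbT : b ∈ T := sdiff_subset (hb ▸ mem_singleton_self b)
    refine Or.inr (Or.inr (Or.inr ⟨b, hbT, ?_⟩))
    rw [← sdiff_singleton_eq_erase, ← hb, Finset.sdiff_sdiff_eq_self hA]
  · exact Or.inr (Or.inl (eq_of_subset_of_card_le hA (by omega)))

/-- The trace of the set family `𝓕` on `T`: the family of all intersections of its members
with `T`. -/
def traceOn (𝓕 : Finset (Finset ι)) (T : Finset ι) : Finset (Finset ι) :=
  𝓕.image (· ∩ T)

theorem mem_traceOn : A ∈ traceOn 𝓕 T ↔ ∃ B ∈ 𝓕, B ∩ T = A :=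
  mem_image

theorem inter_mem_traceOn (hA : A ∈ 𝓕) (T : Finset ι) : A ∩ T ∈ traceOn 𝓕 T :=
  mem_image_of_mem _ hA

theorem subset_of_mem_traceOn (hA : A ∈ traceOn 𝓕 T) : A ⊆ T := by
  obtain ⟨B, -, rfl⟩ := mem_traceOn.1 hA
  exact inter_subset_right

theorem mem_traceOn_compls [Fintype ι] (hA : A ⊆ T) :
    A ∈ traceOn 𝓕ᶜˢ T ↔ T \ A ∈ traceOn 𝓕 T := by
  simp only [mem_traceOn, exists_compls_iff]
  refine exists_congr fun B => and_congr_right fun _ => ?_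
  rw [inter_comm, ← sdiff_eq_inter_compl, inter_comm B]
  constructor
  · rintro rfl
    exact (sdiff_sdiff_self_left T B).symm
  · intro h
    rw [← sdiff_inter_self_left, h, Finset.sdiff_sdiff_eq_self hA]

theorem card_le_two_mul_card_traceOn_compl_singleton [Fintype ι] (𝓕 : Finset (Finset ι)) (x : ι) :
    #𝓕 ≤ 2 * #(traceOn 𝓕 {x}ᶜ) := by
  refine card_le_mul_card_image 𝓕 2 fun A _ => ?_
  have hfiber : {B ∈ 𝓕 | B ∩ {x}ᶜ = A} ⊆ {A, insert x A} := by
    intro B hB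
    obtain ⟨-, rfl⟩ := mem_filter.1 hB
    rw [← sdiff_eq_inter_compl, sdiff_singleton_eq_erase, mem_insert, mem_singleton]
    by_cases hx : x ∈ B
    · exact Or.inr (insert_erase hx).symm
    · exact Or.inl (erase_eq_of_notMem hx).symm
  exact (card_le_card hfiber).trans card_le_two

theorem foundIn_of_mem_traceOn {m n : ℕ} {N : Fin m → Fin n → Prop} (hN : Function.Injective N)
    (hcol : ∀ j, ∃ i, N i j) {e : Fin n → ι} (he : Function.Injective e) (heT : ∀ j, e j ∈ T)
    (hrow : ∀ i, ∃ R ∈ traceOn 𝓕 T, ∀ j, e j ∈ R ↔ N i j) :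
    FoundIn N ((↑) '' (𝓕 : Set (Finset ι)) : Set (Set ι)) := by
  refine foundIn_of_rows hN hcol he fun i => ?_
  obtain ⟨R, hR, hRN⟩ := hrow i
  obtain ⟨B, hB, rfl⟩ := mem_traceOn.1 hR
  refine ⟨B, Set.mem_image_of_mem _ hB, fun j => ?_⟩
  rw [← hRN, mem_inter, and_iff_left (heT j), mem_coe]

theorem foundIn_singletonMatrix {n : ℕ} (hT : #T = n) (hempty : ∅ ∈ traceOn 𝓕 T)
    (hsingle : ∀ a ∈ T, {a} ∈ traceOn 𝓕 T) :
    FoundIn (singletonMatrix n) ((↑) '' (𝓕 : Set (Finset ι)) : Set (Set ι)) := by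
  let e := (T.equivFinOfCardEq hT).symm
  refine foundIn_of_mem_traceOn (singletonMatrix_injective n) (fun j => ⟨j.succ, j.val_succ⟩)
    (Subtype.val_injective.comp e.injective) (fun j => (e j).2) fun i => ?_
  cases i using Fin.cases with
  | zero => exact ⟨∅, hempty, fun j => by simp [singletonMatrix]⟩
  | succ k =>
    exact ⟨{(e k : ι)}, hsingle _ (e k).2,
      fun j => by simp [singletonMatrix, Fin.ext_iff, eq_comm]⟩

theorem foundIn_cosingletonMatrix {n : ℕ} (hT : #T = n) (hfull : T ∈ traceOn 𝓕 T)
    (herase : ∀ a ∈ T, T.erase a ∈ traceOn 𝓕 T) :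
    FoundIn (cosingletonMatrix n) ((↑) '' (𝓕 : Set (Finset ι)) : Set (Set ι)) := by
  let e := (T.equivFinOfCardEq hT).symm
  refine foundIn_of_mem_traceOn (cosingletonMatrix_injective n)
    (fun j => ⟨Fin.last n, j.isLt.ne'⟩)
    (Subtype.val_injective.comp e.injective) (fun j => (e j).2) fun i => ?_
  cases i using Fin.lastCases with
  | last => exact ⟨T, hfull, fun j => by simp [cosingletonMatrix, j.isLt.ne']⟩
  | cast k =>
    exact ⟨T.erase (e k), herase _ (e k).2,
      fun j => by simp [cosingletonMatrix, Fin.ext_iff, eq_comm]⟩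

theorem foundIn_monotoneMatrix_three (hT : #T = 3) (ha : a ∈ T) (hb : b ∈ T) (hab : a ≠ b)
    (hempty : ∅ ∈ traceOn 𝓕 T) (hsingle : {a} ∈ traceOn 𝓕 T)
    (herase : T.erase b ∈ traceOn 𝓕 T) (hfull : T ∈ traceOn 𝓕 T) :
    FoundIn (monotoneMatrix 3) ((↑) '' (𝓕 : Set (Finset ι)) : Set (Set ι)) := by
  obtain ⟨c, hc⟩ : ((T.erase a).erase b).Nonempty := by
    rw [← card_pos, card_erase_of_mem (mem_erase.2 ⟨hab.symm, hb⟩), card_erase_of_mem ha, hT]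
    decide
  simp only [mem_erase] at hc
  obtain ⟨hcb, hca, hcT⟩ := hc
  have he : Function.Injective ![a, c, b] := by
    rw [← List.nodup_ofFn]
    simp [hab, hcb, hca.symm]
  have heT : ∀ j, ![a, c, b] j ∈ T := by
    simp [Fin.forall_fin_succ, ha, hcT, hb]
  have hrows : ∀ i, ![∅, {a}, T.erase b, T] i ∈ traceOn 𝓕 T := by
    simp [Fin.forall_fin_succ, hempty, hsingle, herase, hfull]
  refine foundIn_of_mem_traceOn (monotoneMatrix_injective 3) (fun j => ⟨Fin.last 3, j.isLt⟩) he heT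
    fun i => ⟨_, hrows i, ?_⟩
  fin_cases i <;> simp [Fin.forall_fin_succ, monotoneMatrix, ha, hb, hcT, hab, hab.symm, hcb, hca]

end Trace

/-- No trace of `𝓕` on a three-element set `T` contains `∅` and the three singletons, or `T` and
the three pairs, or a maximal chain of subsets of `T`: these are the traces realising `S³`, `S̄³`
and `M³`. A maximal chain is encoded as `∅ ⊂ {a} ⊂ T \ {b} ⊂ T` with `a ≠ b`. -/
structure AvoidsTripleTraces (𝓕 : Finset (Finset ι)) : Prop where
  exists_singleton_notMem : ∀ ⦃T⦄, #T = 3 → ∅ ∈ traceOn 𝓕 T → ∃ a ∈ T, {a} ∉ traceOn 𝓕 T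
  exists_erase_notMem : ∀ ⦃T⦄, #T = 3 → T ∈ traceOn 𝓕 T → ∃ a ∈ T, T.erase a ∉ traceOn 𝓕 T
  eq_of_chain : ∀ ⦃T⦄, #T = 3 → ∅ ∈ traceOn 𝓕 T → T ∈ traceOn 𝓕 T → ∀ ⦃a⦄, a ∈ T → ∀ ⦃b⦄, b ∈ T →
    {a} ∈ traceOn 𝓕 T → T.erase b ∈ traceOn 𝓕 T → a = b

namespace AvoidsTripleTraces

theorem of_not_foundIn
    (hS : ¬FoundIn (singletonMatrix 3) ((↑) '' (𝓕 : Set (Finset ι)) : Set (Set ι)))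
    (hC : ¬FoundIn (cosingletonMatrix 3) ((↑) '' (𝓕 : Set (Finset ι)) : Set (Set ι)))
    (hM : ¬FoundIn (monotoneMatrix 3) ((↑) '' (𝓕 : Set (Finset ι)) : Set (Set ι))) :
    AvoidsTripleTraces 𝓕 where
  exists_singleton_notMem T hT hempty := by
    by_contra! hsingle
    exact hS (foundIn_singletonMatrix hT hempty hsingle)
  exists_erase_notMem T hT hfull := by
    by_contra! herase
    exact hC (foundIn_cosingletonMatrix hT hfull herase)
  eq_of_chain T hT hempty hfull a ha b hb hsingle herase := by
    by_contra hab
    exact hM (foundIn_monotoneMatrix_three hT ha hb hab hempty hsingle herase hfull)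

theorem compls [Fintype ι] (h : AvoidsTripleTraces 𝓕) : AvoidsTripleTraces 𝓕ᶜˢ := by
  have hempty (T : Finset ι) : ∅ ∈ traceOn 𝓕ᶜˢ T ↔ T ∈ traceOn 𝓕 T := by
    rw [mem_traceOn_compls (empty_subset T), sdiff_empty]
  have hfull (T : Finset ι) : T ∈ traceOn 𝓕ᶜˢ T ↔ ∅ ∈ traceOn 𝓕 T := by
    rw [mem_traceOn_compls Subset.rfl, sdiff_self, bot_eq_empty]
  have hsingle {T : Finset ι} {a : ι} (ha : a ∈ T) :
      {a} ∈ traceOn 𝓕ᶜˢ T ↔ T.erase a ∈ traceOn 𝓕 T := by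
    rw [mem_traceOn_compls (singleton_subset_iff.2 ha), sdiff_singleton_eq_erase]
  have herase {T : Finset ι} {a : ι} (ha : a ∈ T) :
      T.erase a ∈ traceOn 𝓕ᶜˢ T ↔ {a} ∈ traceOn 𝓕 T := by
    rw [mem_traceOn_compls (erase_subset a T), sdiff_erase_self ha]
  refine ⟨fun T hT hT₀ => ?_, fun T hT hT₁ => ?_, fun T hT hT₀ hT₁ a ha b hb haT hbT => ?_⟩
  · obtain ⟨a, ha, haT⟩ := h.exists_erase_notMem hT ((hempty T).1 hT₀)
    exact ⟨a, ha, (hsingle ha).not.2 haT⟩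
  · obtain ⟨a, ha, haT⟩ := h.exists_singleton_notMem hT ((hfull T).1 hT₁)
    exact ⟨a, ha, (herase ha).not.2 haT⟩
  · exact (h.eq_of_chain hT ((hfull T).1 hT₁) ((hempty T).1 hT₀) hb ha
      ((herase hb).1 hbT) ((hsingle ha).1 haT)).symm

theorem card_traceOn_le_four (h : AvoidsTripleTraces 𝓕) (hT : #T = 3) (hempty : ∅ ∈ traceOn 𝓕 T)
    (hfull : T ∈ traceOn 𝓕 T) : #(traceOn 𝓕 T) ≤ 4 := by
  let P := {a ∈ T | {a} ∈ traceOn 𝓕 T}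
  let Q := {b ∈ T | T.erase b ∈ traceOn 𝓕 T}
  have hP : #P < 3 := by
    rw [← hT]
    exact card_lt_card <| filter_ssubset.2 <| h.exists_singleton_notMem hT hempty
  have hQ : #Q < 3 := by
    rw [← hT]
    exact card_lt_card <| filter_ssubset.2 <| h.exists_erase_notMem hT hfull
  have hPQ : ∀ a ∈ P, ∀ b ∈ Q, a = b := fun a ha b hb =>
    h.eq_of_chain hT hempty hfull (mem_filter.1 ha).1 (mem_filter.1 hb).1 (mem_filter.1 ha).2
      (mem_filter.1 hb).2
  have hPQ_card : #P + #Q ≤ 2 := by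
    rcases P.eq_empty_or_nonempty with hP₀ | ⟨a, ha⟩
    · rw [hP₀, card_empty]
      omega
    rcases Q.eq_empty_or_nonempty with hQ₀ | ⟨b, hb⟩
    · rw [hQ₀, card_empty]
      omega
    have hP₁ : #P ≤ 1 := card_le_one.2 fun c hc d hd => (hPQ c hc b hb).trans (hPQ d hd b hb).symm
    have hQ₁ : #Q ≤ 1 := card_le_one.2 fun c hc d hd => (hPQ a ha c hc).symm.trans (hPQ a ha d hd)
    omega
  have hcover : traceOn 𝓕 T ⊆ {∅, T} ∪ (P.image singleton ∪ Q.image T.erase) := by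
    intro A hA
    simp only [mem_union, mem_insert, mem_singleton, mem_image]
    rcases subset_cases_of_card_eq_three hT (subset_of_mem_traceOn hA) with
      rfl | rfl | ⟨a, ha, rfl⟩ | ⟨b, hb, rfl⟩
    · exact Or.inl (Or.inl rfl)
    · exact Or.inl (Or.inr rfl)
    · exact Or.inr (Or.inl ⟨a, mem_filter.2 ⟨ha, hA⟩, rfl⟩)
    · exact Or.inr (Or.inr ⟨b, mem_filter.2 ⟨hb, hA⟩, rfl⟩)
  calc #(traceOn 𝓕 T)
      ≤ #({∅, T} ∪ (P.image singleton ∪ Q.image T.erase)) := card_le_card hcover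
    _ ≤ #{∅, T} + (#(P.image singleton) + #(Q.image T.erase)) :=
        (card_union_le _ _).trans (Nat.add_le_add_left (card_union_le _ _) _)
    _ ≤ 2 + (#P + #Q) :=
        Nat.add_le_add card_le_two (Nat.add_le_add card_image_le card_image_le)
    _ ≤ 4 := by omega

section FourPoints

variable [Fintype ι]

theorem card_le_eight_of_mem_traceOn_compl_singleton (h : AvoidsTripleTraces 𝓕)
    (hι : Fintype.card ι = 4) (hempty : ∅ ∈ traceOn 𝓕 {x}ᶜ) (hfull : {x}ᶜ ∈ traceOn 𝓕 {x}ᶜ) :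
    #𝓕 ≤ 8 :=
  calc #𝓕 ≤ 2 * #(traceOn 𝓕 {x}ᶜ) := card_le_two_mul_card_traceOn_compl_singleton 𝓕 x
    _ ≤ 2 * 4 := by
      gcongr
      exact h.card_traceOn_le_four (card_compl_singleton_of_card_eq_succ hι x) hempty hfull

theorem exists_missing_singleton_and_pair (h : AvoidsTripleTraces 𝓕) (hι : Fintype.card ι = 4)
    (hempty : ∅ ∈ traceOn 𝓕 {x}ᶜ) : ∃ a ≠ x, {a} ∉ 𝓕 ∧ {a, x} ∉ 𝓕 := by
  obtain ⟨a, ha, haT⟩ :=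
    h.exists_singleton_notMem (card_compl_singleton_of_card_eq_succ hι x) hempty
  have hax : a ≠ x := by simpa using ha
  refine ⟨a, hax, fun hmem => haT ?_, fun hmem => haT ?_⟩ <;>
    have htrace := inter_mem_traceOn hmem {x}ᶜ
  · rwa [inter_eq_left.2 (singleton_subset_iff.2 ha)] at htrace
  · rwa [insert_inter_of_mem ha, inter_compl, insert_empty_eq] at htrace

theorem card_le_two_of_empty_mem (h : AvoidsTripleTraces 𝓕) (hι : Fintype.card ι = 4)
    (hcard : 8 < #𝓕) (hempty : ∅ ∈ 𝓕) (hA : A ∈ 𝓕) : #A ≤ 2 := by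
  by_contra! hA₃
  have : Nonempty ι := Fintype.card_pos_iff.1 (by omega)
  obtain ⟨x, hx⟩ : ∃ x, Aᶜ ⊆ {x} := by
    rw [← card_le_one_iff_subset_singleton, card_compl, hι]
    omega
  have hempty' : ∅ ∈ traceOn 𝓕 {x}ᶜ := by
    simpa only [empty_inter] using inter_mem_traceOn hempty {x}ᶜ
  have hfull : {x}ᶜ ∈ traceOn 𝓕 {x}ᶜ := by
    simpa only [inter_eq_right.2 (compl_le_iff_compl_le.1 hx)] using inter_mem_traceOn hA {x}ᶜ
  exact hcard.not_ge (h.card_le_eight_of_mem_traceOn_compl_singleton hι hempty' hfull)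

theorem card_le_eight_of_empty_mem (h : AvoidsTripleTraces 𝓕) (hι : Fintype.card ι = 4)
    (hempty : ∅ ∈ 𝓕) : #𝓕 ≤ 8 := by
  by_contra! hcard
  have hmissing (x : ι) : ∃ a ≠ x, {a} ∉ 𝓕 ∧ {a, x} ∉ 𝓕 :=
    h.exists_missing_singleton_and_pair hι (by simpa using inter_mem_traceOn hempty {x}ᶜ)
  obtain ⟨x⟩ : Nonempty ι := Fintype.card_pos_iff.1 (by omega)
  obtain ⟨a, hax, ha, hpair⟩ := hmissing x
  obtain ⟨y, -, hy⟩ : ∃ y ∈ univ, y ∉ ({a, x} : Finset ι) := by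
    apply exists_mem_notMem_of_card_lt_card
    rw [card_univ, hι, card_pair hax]
    decide
  obtain ⟨b, hby, -, hpair'⟩ := hmissing y
  have hne : ({a, x} : Finset ι) ≠ {b, y} := fun heq => hy (heq ▸ by simp)
  have hslices := card_eq_sum_five_slices 𝓕 hι
  have h₀ : #(𝓕 # 0) ≤ 1 := by simpa using (sized_slice (𝒜 := 𝓕) (r := 0)).card_le
  have h₁ : #(𝓕 # 1) + #{({a} : Finset ι)} ≤ (Fintype.card ι).choose 1 :=
    card_slice_add_card_le_choose (by simp) (by simpa using ha)
  have h₂ : #(𝓕 # 2) ≤ 4 := card_slice_two_le_four hι hax hby hne hpair hpair'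
  have hlarge {r : ℕ} (hr : 2 < r) : #(𝓕 # r) = 0 := by
    refine card_eq_zero.2 <| filter_eq_empty_iff.2 fun A hA hAr => ?_
    have := h.card_le_two_of_empty_mem hι hcard hempty hA
    omega
  have h₃ : #(𝓕 # 3) = 0 := hlarge (by decide)
  have h₄ : #(𝓕 # 4) = 0 := hlarge (by decide)
  rw [card_singleton, hι, Nat.choose_one_right] at h₁
  omega

theorem card_slice_one_add_card_slice_three_le_four (h : AvoidsTripleTraces 𝓕)
    (hι : Fintype.card ι = 4) (hcard : 8 < #𝓕) : #(𝓕 # 1) + #(𝓕 # 3) ≤ 4 := by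
  have hdisj : Disjoint (𝓕ᶜˢ # 1) 𝓕 := by
    refine disjoint_left.2 fun A hA hA' => ?_
    obtain ⟨hAc, hA₁⟩ := mem_slice.1 hA
    obtain ⟨x, rfl⟩ := card_eq_one.1 hA₁
    have hempty : ∅ ∈ traceOn 𝓕 {x}ᶜ := by
      simpa using inter_mem_traceOn hA' {x}ᶜ
    have hfull : {x}ᶜ ∈ traceOn 𝓕 {x}ᶜ := by
      simpa using inter_mem_traceOn (mem_compls.1 hAc) {x}ᶜ
    exact hcard.not_ge (h.card_le_eight_of_mem_traceOn_compl_singleton hι hempty hfull)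
  have hle := card_slice_add_card_le_choose sized_slice hdisj
  rwa [card_slice_compls 𝓕 (by omega), hι, Nat.choose_one_right] at hle

theorem card_slice_one_le_one (h : AvoidsTripleTraces 𝓕) (hι : Fintype.card ι = 4)
    (hpairs : 5 ≤ #(𝓕 # 2)) : #(𝓕 # 1) ≤ 1 := by
  have hmissing {x : ι} (hx : {x} ∈ 𝓕) : ∃ a ≠ x, {a} ∉ 𝓕 ∧ {a, x} ∉ 𝓕 :=
    h.exists_missing_singleton_and_pair hι (by simpa using inter_mem_traceOn hx {x}ᶜ)
  refine card_le_one.2 fun A hA B hB => ?_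
  obtain ⟨hA, x, rfl⟩ := (mem_slice.1 hA).imp_right card_eq_one.1
  obtain ⟨hB, y, rfl⟩ := (mem_slice.1 hB).imp_right card_eq_one.1
  obtain ⟨a, hax, ha, hpair⟩ := hmissing hA
  obtain ⟨b, hby, -, hpair'⟩ := hmissing hB
  have heq : ({a, x} : Finset ι) = {b, y} := by
    by_contra hne
    have hle : #(𝓕 # 2) ≤ 4 := card_slice_two_le_four hι hax hby hne hpair hpair'
    omega
  have hy : y ∈ ({a, x} : Finset ι) := heq ▸ by simp
  rcases mem_insert.1 hy with rfl | hy
  · exact absurd hB ha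
  · rw [mem_singleton.1 hy]

theorem card_le_eight (h : AvoidsTripleTraces 𝓕) (hι : Fintype.card ι = 4) : #𝓕 ≤ 8 := by
  by_contra! hcard
  have hempty : ∅ ∉ 𝓕 := fun hmem => hcard.not_ge (h.card_le_eight_of_empty_mem hι hmem)
  have huniv : univ ∉ 𝓕 := fun hmem => hcard.not_ge <| by
    simpa only [card_compls] using h.compls.card_le_eight_of_empty_mem hι (by simpa using hmem)
  have hslices := card_eq_sum_five_slices 𝓕 hι
  have h₀ : #(𝓕 # 0) = 0 := by
    simp [slice, hempty]
  have h₄ : #(𝓕 # 4) = 0 := by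
    simp [slice, ← hι, card_eq_iff_eq_univ, huniv]
  have h₁₃ : #(𝓕 # 1) + #(𝓕 # 3) ≤ 4 := h.card_slice_one_add_card_slice_three_le_four hι hcard
  have h₂ : #(𝓕 # 2) ≤ 6 := by
    simpa [hι, Nat.choose] using (sized_slice (𝒜 := 𝓕) (r := 2)).card_le
  have h₁ : #(𝓕 # 1) ≤ 1 := h.card_slice_one_le_one hι (by omega)
  have h₃ : #(𝓕 # 3) ≤ 1 := by
    have hcompl₁ : #(𝓕ᶜˢ # 1) = #(𝓕 # 3) := by rw [card_slice_compls 𝓕 (by omega), hι]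
    have hcompl₂ : #(𝓕ᶜˢ # 2) = #(𝓕 # 2) := by rw [card_slice_compls 𝓕 (by omega), hι]
    exact hcompl₁ ▸ h.compls.card_slice_one_le_one hι (by omega)
  omega

end FourPoints

end AvoidsTripleTraces

theorem exists_finset_family_on_sUnion {α : Type*} {𝓗 : Set (Set α)} (hfin : (⋃₀ 𝓗).Finite) :
    ∃ 𝓕 : Finset (Finset (⋃₀ 𝓗)),
      Set.image Subtype.val '' ((↑) '' (𝓕 : Set (Finset (⋃₀ 𝓗))) : Set (Set (⋃₀ 𝓗))) = 𝓗 := by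
  classical
  have := hfin.fintype
  refine ⟨univ.filter fun A => Subtype.val '' (A : Set (⋃₀ 𝓗)) ∈ 𝓗,
    Set.Subset.antisymm ?_ fun H hH => ?_⟩
  · rintro _ ⟨_, ⟨A, hA, rfl⟩, rfl⟩
    exact (mem_filter.1 hA).2
  · have hH' : Subtype.val '' (Subtype.val ⁻¹' H : Set (⋃₀ 𝓗)) = H := by
      rw [Subtype.image_preimage_coe, Set.inter_eq_right.2 (Set.subset_sUnion_of_mem hH)]
    refine ⟨Subtype.val ⁻¹' H, ⟨(Subtype.val ⁻¹' H : Set (⋃₀ 𝓗)).toFinset, ?_, ?_⟩, hH'⟩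
    · simpa only [coe_filter, mem_univ, true_and, Set.mem_ofPred_eq, Set.coe_toFinset, hH'] using hH
    · exact Set.coe_toFinset _

end Development

theorem nine_sets_four_elements_general {α : Type*} (𝓗 : Set (Set α)) (hcard : 9 ≤ 𝓗.encard)
    (hunion : (⋃₀ 𝓗).encard = 4) :
    FoundIn (singletonMatrix 3) 𝓗 ∨ FoundIn (cosingletonMatrix 3) 𝓗 ∨
      FoundIn (monotoneMatrix 3) 𝓗 := by
  classical
  have hfin : (⋃₀ 𝓗).Finite := Set.finite_of_encard_eq_coe hunion
  have := hfin.fintype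
  have hι : Fintype.card (⋃₀ 𝓗) = 4 := by
    exact_mod_cast (Set.coe_fintypeCard (⋃₀ 𝓗)).trans hunion
  obtain ⟨𝓕, h𝓕⟩ := exists_finset_family_on_sUnion hfin
  have hcard_le : 𝓗.encard ≤ 𝓕.card :=
    (congrArg Set.encard h𝓕.symm).trans_le <| (Set.encard_image_le _ _).trans <|
      (Set.encard_image_le _ _).trans_eq (Set.encard_coe_eq_coe_finsetCard 𝓕)
  have not_foundIn_lift {N : Fin 4 → Fin 3 → Prop} (hN : ¬FoundIn N 𝓗) :
      ¬FoundIn N ((↑) '' (𝓕 : Set (Finset (⋃₀ 𝓗))) : Set (Set (⋃₀ 𝓗))) :=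
    fun h => hN <| by simpa only [h𝓕] using h.image Subtype.val_injective
  by_contra! ⟨hS, hC, hM⟩
  have hle : 𝓕.card ≤ 8 :=
    (AvoidsTripleTraces.of_not_foundIn (not_foundIn_lift hS) (not_foundIn_lift hC)
      (not_foundIn_lift hM)).card_le_eight hι
  have hge : 9 ≤ 𝓕.card := by exact_mod_cast hcard.trans hcard_le
  omega

/-- **Lemma.** In any collection of nine pairwise distinct sets whose union has
exactly four elements, one of `S³`, `S̄³`, `M³` can be found. -/
theorem nine_sets_four_elements {α : Type*} (𝓗 : Finset (Set α))
    (hcard : 𝓗.card = 9) (hunion : (⋃₀ (↑𝓗 : Set (Set α))).encard = 4) :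
    FoundIn (singletonMatrix 3) (↑𝓗 : Set (Set α)) ∨
    FoundIn (cosingletonMatrix 3) (↑𝓗 : Set (Set α)) ∨
    FoundIn (monotoneMatrix 3) (↑𝓗 : Set (Set α)) := by
  refine nine_sets_four_elements_general _ ?_ hunion
  rw [Set.encard_coe_eq_coe_finsetCard, hcard, Nat.cast_ofNat]
end

section
/- Let 𝓗 be a reduced collection of pairwise distinct sets whose union has at least five elements. Suppose the 3×4 matrix with rows 0000, 1000, 0100 can be found in 𝓗, i.e. there exist sets H₁, H₂, H₃ in 𝓗 and four distinct elements e₁, e₂, e₃, e₄ of ⋃𝓗 such that H₁ ∩ {e₁,e₂,e₃,e₄} = ∅, H₂ ∩ {e₁,e₂,e₃,e₄} = {e₁}, and H₃ ∩ {e₁,e₂,e₃,e₄} = {e₂}. Then at least one of the 3-singleton matrix S³, the 3-cosingleton matrix S̄³, and the 3-monotone matrix M³ can be found in 𝓗. -/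
/-- A collection of sets is *reduced* if every element of the union is useful to
make the sets distinct: for every `x ∈ ⋃₀ 𝓗` there are two distinct sets `A ≠ B`
of `𝓗` with `A \ {x} = B \ {x}`. -/
def Reduced {α : Type*} (𝓗 : Set (Set α)) : Prop :=
  ∀ x ∈ ⋃₀ 𝓗, ∃ A ∈ 𝓗, ∃ B ∈ 𝓗, A ≠ B ∧ A \ {x} = B \ {x}

/-
Call a pair `G`, `G ∪ {x}` of distinct members of `𝓗` an edge in direction `x`; a collection is
reduced iff every element of its union is the direction of an edge. Traces are written as words.

Suppose none of the three matrices is found, and let `a, b, c, d` carry the rows `0000, 1000, 0100`.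
On `a, b, c` the word `001` would complete `S³`, and `110, 111` would complete `M³`, so an edge in
direction `c` starts from a set containing exactly one of `a, b`. By `M³` this set avoids `d`, and
by `S³` the edges in directions `c` and `d` do not sit above the same one of `a, b`. So `𝓗` contains
the path `1010 - 1000 - 0000 - 0100 - 0101`, after exchanging `c` and `d` if necessary.

Now look at the values of a fifth element `x` on the three middle sets of the path. The word `000`
would give three directions `c, d, x` above only two elements `a, b`; `S³` and `M³` exclude `010`,
`110` and `011`; an edge in direction `x` excludes `111` by `S̄³`, and an edge in direction `a` or
`b` excludes the words with value `0` on `0000` and `1` on `1000` or `0100`.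
-/

section

variable {α : Type*} {𝓗 : Set (Set α)}

theorem encard_quadruple_le_four (a b c d : α) : ({a, b, c, d} : Set α).encard ≤ 4 := by
  classical
  have h : (({a, b, c, d} : Finset α) : Set α).encard ≤ 4 := by
    rw [Set.encard_coe_eq_coe_finsetCard]
    exact_mod_cast Finset.card_le_four
  simpa using h

theorem foundIn_of_forall_mem_iff {m n : ℕ} {N : Fin m → Fin n → Prop}
    {H : Fin m → Set α} {e : Fin n → α}
    (hrow : ∀ i i', (∀ j, N i j ↔ N i' j) → i = i')
    (hcol : ∀ j j', (∀ i, N i j ↔ N i j') → j = j')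
    (hone : ∀ j, ∃ i, N i j) (hH : ∀ i, H i ∈ 𝓗) (hN : ∀ i j, e j ∈ H i ↔ N i j) :
    FoundIn N 𝓗 := by
  refine ⟨H, e, fun i i' h => hrow i i' fun j => ?_, fun j j' h => hcol j j' fun i => ?_,
    hH, fun j => ?_, hN⟩
  · rw [← hN, ← hN, h]
  · rw [← hN, ← hN, h]
  · obtain ⟨i, hi⟩ := hone j
    exact ⟨H i, hH i, (hN i j).2 hi⟩

/-- `𝓗` contains none of the matrices `S³`, `S̄³`, `M³`. -/
structure Avoiding (𝓗 : Set (Set α)) : Prop where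
  not_foundIn_singleton : ¬ FoundIn (singletonMatrix 3) 𝓗
  not_foundIn_cosingleton : ¬ FoundIn (cosingletonMatrix 3) 𝓗
  not_foundIn_monotone : ¬ FoundIn (monotoneMatrix 3) 𝓗

namespace Avoiding

variable {H₀ H₁ H₂ H₃ : Set α}

theorem false_of_singleton (h : Avoiding 𝓗) (a b c : α)
    (h₀ : H₀ ∈ 𝓗) (h₁ : H₁ ∈ 𝓗) (h₂ : H₂ ∈ 𝓗) (h₃ : H₃ ∈ 𝓗)
    (t₀ : a ∉ H₀ ∧ b ∉ H₀ ∧ c ∉ H₀) (t₁ : a ∈ H₁ ∧ b ∉ H₁ ∧ c ∉ H₁)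
    (t₂ : a ∉ H₂ ∧ b ∈ H₂ ∧ c ∉ H₂) (t₃ : a ∉ H₃ ∧ b ∉ H₃ ∧ c ∈ H₃) : False := by
  refine h.not_foundIn_singleton <|
    foundIn_of_forall_mem_iff (H := ![H₀, H₁, H₂, H₃]) (e := ![a, b, c])
    (by unfold singletonMatrix; decide) (by unfold singletonMatrix; decide)
    (by unfold singletonMatrix; decide) ?_ ?_
  · simp [Fin.forall_fin_succ, h₀, h₁, h₂, h₃]
  · simp [Fin.forall_fin_succ, singletonMatrix, t₀, t₁, t₂, t₃]

theorem false_of_cosingleton (h : Avoiding 𝓗) (a b c : α)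
    (h₀ : H₀ ∈ 𝓗) (h₁ : H₁ ∈ 𝓗) (h₂ : H₂ ∈ 𝓗) (h₃ : H₃ ∈ 𝓗)
    (t₀ : a ∉ H₀ ∧ b ∈ H₀ ∧ c ∈ H₀) (t₁ : a ∈ H₁ ∧ b ∉ H₁ ∧ c ∈ H₁)
    (t₂ : a ∈ H₂ ∧ b ∈ H₂ ∧ c ∉ H₂) (t₃ : a ∈ H₃ ∧ b ∈ H₃ ∧ c ∈ H₃) : False := by
  refine h.not_foundIn_cosingleton <|
    foundIn_of_forall_mem_iff (H := ![H₀, H₁, H₂, H₃]) (e := ![a, b, c])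
    (by unfold cosingletonMatrix; decide) (by unfold cosingletonMatrix; decide)
    (by unfold cosingletonMatrix; decide) ?_ ?_
  · simp [Fin.forall_fin_succ, h₀, h₁, h₂, h₃]
  · simp [Fin.forall_fin_succ, cosingletonMatrix, t₀, t₁, t₂, t₃]

theorem false_of_monotone (h : Avoiding 𝓗) (a b c : α)
    (h₀ : H₀ ∈ 𝓗) (h₁ : H₁ ∈ 𝓗) (h₂ : H₂ ∈ 𝓗) (h₃ : H₃ ∈ 𝓗)
    (t₀ : a ∉ H₀ ∧ b ∉ H₀ ∧ c ∉ H₀) (t₁ : a ∈ H₁ ∧ b ∉ H₁ ∧ c ∉ H₁)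
    (t₂ : a ∈ H₂ ∧ b ∈ H₂ ∧ c ∉ H₂) (t₃ : a ∈ H₃ ∧ b ∈ H₃ ∧ c ∈ H₃) : False := by
  refine h.not_foundIn_monotone <|
    foundIn_of_forall_mem_iff (H := ![H₀, H₁, H₂, H₃]) (e := ![a, b, c])
    (by unfold monotoneMatrix; decide) (by unfold monotoneMatrix; decide)
    (by unfold monotoneMatrix; decide) ?_ ?_
  · simp [Fin.forall_fin_succ, h₀, h₁, h₂, h₃]
  · simp [Fin.forall_fin_succ, monotoneMatrix, t₀, t₁, t₂, t₃]

end Avoiding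

/-- `G` is the lower end of an edge of `𝓗` (in its one-inclusion graph) in direction `x`. -/
structure IsEdge (𝓗 : Set (Set α)) (x : α) (G : Set α) : Prop where
  mem : G ∈ 𝓗
  notMem : x ∉ G
  insert_mem : insert x G ∈ 𝓗

theorem Reduced.exists_isEdge (h : Reduced 𝓗) {x : α} (hx : x ∈ ⋃₀ 𝓗) : ∃ G, IsEdge 𝓗 x G := by
  obtain ⟨A, hA, B, hB, hne, hAB⟩ := h x hx
  have hins : insert x A = insert x B := by
    rw [← Set.insert_sdiff_singleton, hAB, Set.insert_sdiff_singleton]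
  by_cases hxA : x ∈ A
  · have hxB : x ∉ B := fun hxB => hne <| by
      rwa [Set.insert_eq_of_mem hxA, Set.insert_eq_of_mem hxB] at hins
    exact ⟨B, hB, hxB, by rwa [← hins, Set.insert_eq_of_mem hxA]⟩
  · have hxB : x ∈ B := by
      by_contra hxB
      rw [Set.sdiff_singleton_eq_self hxA, Set.sdiff_singleton_eq_self hxB] at hAB
      exact hne hAB
    exact ⟨A, hA, hxA, by rwa [hins, Set.insert_eq_of_mem hxB]⟩

/-- The sets `O, A, B ∈ 𝓗` show the rows `00`, `10`, `01` on `a, b`, and vanish on `Z`; for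
`Z = {c, d}` this is the matrix with rows `0000`, `1000`, `0100`. -/
structure IsCherry (𝓗 : Set (Set α)) (a b : α) (Z O A B : Set α) : Prop where
  mem_O : O ∈ 𝓗
  mem_A : A ∈ 𝓗
  mem_B : B ∈ 𝓗
  a_notMem_O : a ∉ O
  b_notMem_O : b ∉ O
  a_mem_A : a ∈ A
  b_notMem_A : b ∉ A
  a_notMem_B : a ∉ B
  b_mem_B : b ∈ B
  notMem : ∀ z ∈ Z, z ∉ O ∧ z ∉ A ∧ z ∉ B

namespace IsCherry

variable {a b c d x : α} {Z O A B G K L : Set α}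

theorem symm (C : IsCherry 𝓗 a b Z O A B) : IsCherry 𝓗 b a Z O B A where
  mem_O := C.mem_O
  mem_A := C.mem_B
  mem_B := C.mem_A
  a_notMem_O := C.b_notMem_O
  b_notMem_O := C.a_notMem_O
  a_mem_A := C.b_mem_B
  b_notMem_A := C.a_notMem_B
  a_notMem_B := C.b_notMem_A
  b_mem_B := C.a_mem_A
  notMem z hz := ⟨(C.notMem z hz).1, (C.notMem z hz).2.2, (C.notMem z hz).2.1⟩

theorem a_mem_iff_b_notMem (C : IsCherry 𝓗 a b Z O A B) (h : Avoiding 𝓗) (hc : c ∈ Z)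
    (hG : IsEdge 𝓗 c G) : a ∈ G ↔ b ∉ G := by
  by_contra hab
  by_cases ha : a ∈ G
  · refine h.false_of_monotone a b c C.mem_O C.mem_A hG.mem hG.insert_mem ?_ ?_ ?_ ?_ <;>
      grind [IsCherry, IsEdge]
  · refine h.false_of_singleton a b c C.mem_O C.mem_A C.mem_B hG.insert_mem ?_ ?_ ?_ ?_ <;>
      grind [IsCherry, IsEdge]

theorem notMem_of_isEdge (C : IsCherry 𝓗 a b Z O A B) (h : Avoiding 𝓗) (hc : c ∈ Z) (hd : d ∈ Z)
    (hdc : d ≠ c) (hG : IsEdge 𝓗 c G) : d ∉ G := by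
  intro hdG
  have hab := C.a_mem_iff_b_notMem h hc hG
  by_cases ha : a ∈ G
  · refine h.false_of_monotone a d c C.mem_O C.mem_A hG.mem hG.insert_mem ?_ ?_ ?_ ?_ <;>
      grind [IsCherry, IsEdge]
  · refine h.false_of_monotone b d c C.mem_O C.mem_B hG.mem hG.insert_mem ?_ ?_ ?_ ?_ <;>
      grind [IsCherry, IsEdge]

theorem b_mem_or_b_mem (C : IsCherry 𝓗 a b Z O A B) (h : Avoiding 𝓗) (hc : c ∈ Z) (hd : d ∈ Z)
    (hcd : c ≠ d) (hG : IsEdge 𝓗 c G) (hK : IsEdge 𝓗 d K) : b ∈ G ∨ b ∈ K := by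
  by_contra!
  have hdG := C.notMem_of_isEdge h hc hd hcd.symm hG
  have hcK := C.notMem_of_isEdge h hd hc hcd hK
  refine h.false_of_singleton b c d C.mem_O C.mem_B hG.insert_mem hK.insert_mem ?_ ?_ ?_ ?_ <;>
    grind [IsCherry, IsEdge]

theorem b_mem_iff_b_notMem (C : IsCherry 𝓗 a b Z O A B) (h : Avoiding 𝓗) (hc : c ∈ Z) (hd : d ∈ Z)
    (hcd : c ≠ d) (hG : IsEdge 𝓗 c G) (hK : IsEdge 𝓗 d K) : b ∈ G ↔ b ∉ K := by
  have hb := C.b_mem_or_b_mem h hc hd hcd hG hK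
  have ha := C.symm.b_mem_or_b_mem h hc hd hcd hG hK
  rw [C.a_mem_iff_b_notMem h hc hG, C.a_mem_iff_b_notMem h hd hK] at ha
  tauto

theorem false_of_three_zeros (C : IsCherry 𝓗 a b Z O A B) (h : Avoiding 𝓗) (hc : c ∈ Z)
    (hd : d ∈ Z) (hx : x ∈ Z) (hcd : c ≠ d) (hcx : c ≠ x) (hdx : d ≠ x)
    (hG : IsEdge 𝓗 c G) (hK : IsEdge 𝓗 d K) (hL : IsEdge 𝓗 x L) : False := by
  have hGK := C.b_mem_iff_b_notMem h hc hd hcd hG hK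
  have hGL := C.b_mem_iff_b_notMem h hc hx hcx hG hL
  have hKL := C.b_mem_iff_b_notMem h hd hx hdx hK hL
  tauto

end IsCherry

/-- The sets `A ∪ {c}, A, O, B, B ∪ {d}` form a path in (the one-inclusion graph of) `𝓗`, with
traces `1010, 1000, 0000, 0100, 0101` on `a, b, c, d`. -/
structure IsPath (𝓗 : Set (Set α)) (a b c d : α) (O A B : Set α) : Prop
    extends IsCherry 𝓗 a b {c, d} O A B where
  c_ne_d : c ≠ d
  insert_c_mem : insert c A ∈ 𝓗
  insert_d_mem : insert d B ∈ 𝓗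

theorem IsCherry.exists_isPath {a b c d : α} {O A B : Set α} (C : IsCherry 𝓗 a b {c, d} O A B)
    (h : Avoiding 𝓗) (hred : Reduced 𝓗) (hcd : c ≠ d) (hc : c ∈ ⋃₀ 𝓗) (hd : d ∈ ⋃₀ 𝓗) :
    ∃ A' B', IsPath 𝓗 a b c d O A' B' ∨ IsPath 𝓗 a b d c O A' B' := by
  obtain ⟨G, hG⟩ := hred.exists_isEdge hc
  obtain ⟨K, hK⟩ := hred.exists_isEdge hd
  have hcZ : c ∈ ({c, d} : Set α) := by simp
  have hdZ : d ∈ ({c, d} : Set α) := by simp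
  have haG := C.a_mem_iff_b_notMem h hcZ hG
  have haK := C.a_mem_iff_b_notMem h hdZ hK
  have hGK := C.b_mem_iff_b_notMem h hcZ hdZ hcd hG hK
  have hdG := C.notMem_of_isEdge h hcZ hdZ hcd.symm hG
  have hcK := C.notMem_of_isEdge h hdZ hcZ hcd hK
  by_cases hb : b ∈ G
  · exact ⟨K, G, .inr ⟨by constructor <;> grind [IsCherry, IsEdge], hcd.symm, hK.insert_mem,
      hG.insert_mem⟩⟩
  · exact ⟨G, K, .inl ⟨by constructor <;> grind [IsCherry, IsEdge], hcd, hG.insert_mem,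
      hK.insert_mem⟩⟩

namespace IsPath

variable {a b c d x : α} {O A B G : Set α}

theorem symm (P : IsPath 𝓗 a b c d O A B) : IsPath 𝓗 b a d c O B A where
  toIsCherry := Set.pair_comm c d ▸ P.toIsCherry.symm
  c_ne_d := P.c_ne_d.symm
  insert_c_mem := P.insert_d_mem
  insert_d_mem := P.insert_c_mem

theorem mem_A_or_mem_B (P : IsPath 𝓗 a b c d O A B) (h : Avoiding 𝓗) (hxc : x ≠ c) (hxd : x ≠ d)
    (hxO : x ∈ O) : x ∈ A ∨ x ∈ B := by
  by_contra!
  refine h.false_of_singleton c d x P.mem_A P.insert_c_mem P.insert_d_mem P.mem_O ?_ ?_ ?_ ?_ <;>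
    grind [IsPath, IsCherry]

theorem mem_B_of_mem_A (P : IsPath 𝓗 a b c d O A B) (h : Avoiding 𝓗) (hxO : x ∈ O) (hxA : x ∈ A) :
    x ∈ B := by
  by_contra hxB
  refine h.false_of_monotone x a c P.mem_B P.mem_O P.mem_A P.insert_c_mem ?_ ?_ ?_ ?_ <;>
    grind [IsPath, IsCherry]

theorem a_mem_or_c_mem (P : IsPath 𝓗 a b c d O A B) (h : Avoiding 𝓗) (hxO : x ∈ O) (hxA : x ∈ A)
    (hG : IsEdge 𝓗 x G) : a ∈ G ∨ c ∈ G := by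
  by_contra!
  refine h.false_of_monotone x a c hG.mem P.mem_O P.mem_A P.insert_c_mem ?_ ?_ ?_ ?_ <;>
    grind [IsPath, IsCherry, IsEdge]

theorem false_of_isEdge_of_mem (P : IsPath 𝓗 a b c d O A B) (h : Avoiding 𝓗) (hxO : x ∈ O)
    (hxA : x ∈ A) (hxB : x ∈ B) (hG : IsEdge 𝓗 x G) : False := by
  obtain ⟨p, hpG, hpA, hpB⟩ : ∃ p ∈ G, p ∈ insert c A ∧ p ∉ insert d B := by
    rcases P.a_mem_or_c_mem h hxO hxA hG with ha | hc
    · exact ⟨a, ha, by grind [IsPath, IsCherry]⟩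
    · exact ⟨c, hc, by grind [IsPath, IsCherry]⟩
  obtain ⟨q, hqG, hqB, hqA⟩ : ∃ q ∈ G, q ∈ insert d B ∧ q ∉ insert c A := by
    rcases P.symm.a_mem_or_c_mem h hxO hxB hG with hb | hd
    · exact ⟨b, hb, by grind [IsPath, IsCherry]⟩
    · exact ⟨d, hd, by grind [IsPath, IsCherry]⟩
  refine h.false_of_cosingleton p q x P.insert_d_mem P.insert_c_mem hG.mem hG.insert_mem
    ?_ ?_ ?_ ?_ <;> grind [IsPath, IsCherry, IsEdge]

theorem c_mem_of_isEdge (P : IsPath 𝓗 a b c d O A B) (h : Avoiding 𝓗) (hxa : x ≠ a) (hxO : x ∉ O)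
    (hxA : x ∈ A) (hG : IsEdge 𝓗 a G) : c ∈ G := by
  by_contra hcG
  by_cases hxG : x ∈ G
  · refine h.false_of_monotone x a c P.mem_O hG.mem P.mem_A P.insert_c_mem ?_ ?_ ?_ ?_ <;>
      grind [IsPath, IsCherry, IsEdge]
  · refine h.false_of_monotone a x c P.mem_O hG.insert_mem P.mem_A P.insert_c_mem ?_ ?_ ?_ ?_ <;>
      grind [IsPath, IsCherry, IsEdge]

theorem false_of_isEdge_of_c_mem (P : IsPath 𝓗 a b c d O A B) (h : Avoiding 𝓗)
    (hG : IsEdge 𝓗 a G) (hcG : c ∈ G) : False := by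
  have hbG : b ∈ G := by
    by_contra hbG
    refine h.false_of_singleton a b c P.mem_O P.mem_A P.mem_B hG.mem ?_ ?_ ?_ ?_ <;>
      grind [IsPath, IsCherry, IsEdge]
  by_cases hdG : d ∈ G
  · refine h.false_of_monotone b d c P.mem_O P.mem_B P.insert_d_mem hG.mem ?_ ?_ ?_ ?_ <;>
      grind [IsPath, IsCherry, IsEdge]
  · refine h.false_of_singleton a c d P.mem_O P.mem_A hG.mem P.insert_d_mem ?_ ?_ ?_ ?_ <;>
      grind [IsPath, IsCherry, IsEdge]

theorem notMem_A (P : IsPath 𝓗 a b c d O A B) (h : Avoiding 𝓗) (hred : Reduced 𝓗) (hxa : x ≠ a)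
    (hxO : x ∉ O) : x ∉ A := by
  intro hxA
  obtain ⟨G, hG⟩ := hred.exists_isEdge (x := a) ⟨A, P.mem_A, P.a_mem_A⟩
  exact P.false_of_isEdge_of_c_mem h hG (P.c_mem_of_isEdge h hxa hxO hxA hG)

theorem false_of_notMem (P : IsPath 𝓗 a b c d O A B) (h : Avoiding 𝓗) (hred : Reduced 𝓗)
    (hx : x ∈ ⋃₀ 𝓗) (hxc : x ≠ c) (hxd : x ≠ d) (hxO : x ∉ O) (hxA : x ∉ A) (hxB : x ∉ B) :
    False := by
  have C : IsCherry 𝓗 a b {x, c, d} O A B :=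
    { P with notMem := Set.forall_mem_insert.2 ⟨⟨hxO, hxA, hxB⟩, P.notMem⟩ }
  obtain ⟨G, hG⟩ := hred.exists_isEdge (x := c) ⟨_, P.insert_c_mem, Set.mem_insert c A⟩
  obtain ⟨K, hK⟩ := hred.exists_isEdge (x := d) ⟨_, P.insert_d_mem, Set.mem_insert d B⟩
  obtain ⟨L, hL⟩ := hred.exists_isEdge hx
  exact C.false_of_three_zeros h (by simp) (by simp) (by simp) hxc hxd P.c_ne_d hL hG hK

theorem false_of_mem (P : IsPath 𝓗 a b c d O A B) (h : Avoiding 𝓗) (hred : Reduced 𝓗)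
    (hxc : x ≠ c) (hxd : x ≠ d) (hxO : x ∈ O) : False := by
  obtain ⟨G, hG⟩ := hred.exists_isEdge (x := x) ⟨O, P.mem_O, hxO⟩
  rcases P.mem_A_or_mem_B h hxc hxd hxO with hxA | hxB
  · exact P.false_of_isEdge_of_mem h hxO hxA (P.mem_B_of_mem_A h hxO hxA) hG
  · exact P.false_of_isEdge_of_mem h hxO (P.symm.mem_B_of_mem_A h hxO hxB) hxB hG

theorem sUnion_subset (P : IsPath 𝓗 a b c d O A B) (h : Avoiding 𝓗) (hred : Reduced 𝓗) :
    ⋃₀ 𝓗 ⊆ {a, b, c, d} := by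
  intro x hx
  by_contra hxZ
  obtain ⟨hxa, hxb, hxc, hxd⟩ : x ≠ a ∧ x ≠ b ∧ x ≠ c ∧ x ≠ d := by simpa using hxZ
  by_cases hxO : x ∈ O
  · exact P.false_of_mem h hred hxc hxd hxO
  · exact P.false_of_notMem h hred hx hxc hxd hxO (P.notMem_A h hred hxa hxO)
      (P.symm.notMem_A h hred hxb hxO)

end IsPath

theorem IsCherry.sUnion_subset {a b c d : α} {O A B : Set α} (C : IsCherry 𝓗 a b {c, d} O A B)
    (h : Avoiding 𝓗) (hred : Reduced 𝓗) (hcd : c ≠ d) (hc : c ∈ ⋃₀ 𝓗) (hd : d ∈ ⋃₀ 𝓗) :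
    ⋃₀ 𝓗 ⊆ {a, b, c, d} := by
  obtain ⟨A', B', P | P⟩ := C.exists_isPath h hred hcd hc hd
  · exact P.sUnion_subset h hred
  · rw [Set.pair_comm c d]
    exact P.sUnion_subset h hred

end

/-- **Lemma.** If `𝓗` is reduced, its union has at least five elements, and the
`3 × 4` matrix with rows `0000`, `1000`, `0100` can be found in `𝓗`, then one of
`S³`, `S̄³`, `M³` can be found in `𝓗`. -/
theorem reduced_0000_1000_0100 {α : Type*} (𝓗 : Set (Set α)) (hred : Reduced 𝓗)
    (hbig : 5 ≤ (⋃₀ 𝓗).encard)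
    (h : FoundIn (fun (i : Fin 3) (j : Fin 4) => (i : ℕ) = (j : ℕ) + 1) 𝓗) :
    FoundIn (singletonMatrix 3) 𝓗 ∨ FoundIn (cosingletonMatrix 3) 𝓗 ∨
    FoundIn (monotoneMatrix 3) 𝓗 := by
  obtain ⟨H, e, -, he, hH, heU, hN⟩ := h
  by_contra! hno
  have hav : Avoiding 𝓗 := ⟨hno.1, hno.2.1, hno.2.2⟩
  have C : IsCherry 𝓗 (e 0) (e 1) {e 2, e 3} (H 0) (H 1) (H 2) := by
    constructor <;> simp [hH, hN]
  have hsub : ⋃₀ 𝓗 ⊆ {e 0, e 1, e 2, e 3} :=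
    C.sUnion_subset hav hred (he.ne (by decide)) (heU 2) (heU 3)
  have hle : (⋃₀ 𝓗).encard ≤ 4 :=
    (Set.encard_le_encard hsub).trans (encard_quadruple_le_four _ _ _ _)
  exact absurd (hbig.trans hle) (by decide)
end
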